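/- Let G be a finite connected simple graph that admits a star spanning tree T_s with center v, let T be a spanning tree of G with ∩_G(T) < ∩_G(T_s), and let Δ_T be the set of interbranch cycle-edges of T. Then ∩_{G-Δ_T}(T) < ∩_{G-Δ_T}(T_s), where G - Δ_T is the graph G with the edges of Δ_T removed. -/

import Mathlib

open SimpleGraph

/-- The set of edges lying on some path (in a tree: the unique path) between `x` and `y`
in the graph `T`. -/
def pathEdges {V : Type*} (T : SimpleGraph V) (x y : V) : Set (Sym2 V) :=
  {f | ∃ p : T.Walk x y, p.IsPath ∧ f ∈ p.edges}

/-- The edge set of the tree-cycle induced (in the spanning tree `T`) by the cycle-edge `e`: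
the edge `e` itself together with the edges of the (unique) path in `T` between
the endpoints of `e`. -/
def cycEdges {V : Type*} (T : SimpleGraph V) (e : Sym2 V) : Set (Sym2 V) :=
  insert e {f | ∃ x y, e = s(x, y) ∧ f ∈ pathEdges T x y}

/-- The vertex set of the tree-cycle induced (in the spanning tree `T`) by the
cycle-edge `e`. -/
def cycVerts {V : Type*} (T : SimpleGraph V) (e : Sym2 V) : Set V :=
  {v | ∃ x y, e = s(x, y) ∧ ∃ p : T.Walk x y, p.IsPath ∧ v ∈ p.support}

/-- Two tree-cycles (induced by the cycle-edges `e` and `f`) have non-empty intersection: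
some edge of `T` belongs to both of them. -/
def cyclesIntersect {V : Type*} (T : SimpleGraph V) (e f : Sym2 V) : Prop :=
  (cycEdges T e ∩ cycEdges T f ∩ T.edgeSet).Nonempty

/-- The cycle intersection number `∩_T(c)` of the tree-cycle `c` induced by the
cycle-edge `e`: the number of tree-cycles distinct from `c` whose intersection with `c`
is non-empty. -/
noncomputable def cycleInterNum {V : Type*} (G T : SimpleGraph V) (e : Sym2 V) : ℕ :=
  {f | f ∈ G.edgeSet \ T.edgeSet ∧ f ≠ e ∧ cyclesIntersect T e f}.ncard

/-- The tree intersection number `∩_G(T)`: the number of unordered pairs of distinct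
tree-cycles of `T` whose intersection is non-empty. -/
noncomputable def treeInterNum {V : Type*} (G T : SimpleGraph V) : ℕ :=
  {p : Sym2 (Sym2 V) | ∃ e f : Sym2 V, p = s(e, f) ∧ e ≠ f ∧
    e ∈ G.edgeSet \ T.edgeSet ∧ f ∈ G.edgeSet \ T.edgeSet ∧ cyclesIntersect T e f}.ncard

/-- `T` is a star spanning tree of `G` with center `v`. -/
def IsStarSpanningTree {V : Type*} (G T : SimpleGraph V) (v : V) : Prop :=
  T ≤ G ∧ T.IsTree ∧ ∀ u, u ≠ v → T.Adj v u

/-- `closest-point-set(w, c)`: the set of vertices outside the tree-cycle `c` (induced by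
the cycle-edge `e`) whose closest point on `c` (with respect to distance in `T`) is `w`. -/
def closestPointSet {V : Type*} (T : SimpleGraph V) (e : Sym2 V) (w : V) : Set V :=
  {v | v ∉ cycVerts T e ∧ ∀ u ∈ cycVerts T e, T.dist v w ≤ T.dist v u}

/-- The set of interbranch cycle-edges of the spanning tree `T` (relative to the center
`v` of a star spanning tree): cycle-edges `e = (u, w)` such that the closest point of
`v` on the tree-cycle induced by `e` is neither `u` nor `w`. -/
def interbranchSet {V : Type*} (G T : SimpleGraph V) (v : V) : Set (Sym2 V) :=
  {e | e ∈ G.edgeSet \ T.edgeSet ∧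
    ∀ w ∈ cycVerts T e, (∀ u ∈ cycVerts T e, T.dist v w ≤ T.dist v u) → w ∉ e}

/-!
Root `T` at the center `v` and let `e = uw` be an interbranch cycle-edge, so that neither of `u`,
`w` is a descendant of the other. It suffices that the cycle of `e` meets at least as many cycles
in `T` as in the star: deleting the interbranch edges one at a time then never decreases
`∩(T_s) - ∩(T)`.

In the star, the cycles meeting that of `e` come from edges at `u` or `w`; three of these, namely
`e`, `uv`, `wv`, do not count. In `T`, every cycle-edge crossing the cut around the descendants of
`u`, or around those of `w`, has a cycle meeting that of `e`, because each cut contains at most one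
edge of `T`; again at most three crossing edges do not count. Finally, the two cuts together contain
at least as many edges as there are at `u` or `w`: trade each edge `ux` with `x` a descendant of `u`
for the edge `vx` of the star, and likewise for `w`.
-/

section Cuts

variable {V : Type*}

/-- The cut of `G` determined by the vertex set `S`: the edges with exactly one endpoint in `S`. -/
def edgeCut (G : SimpleGraph V) (S : Set V) : Set (Sym2 V) :=
  {e | ∃ x ∈ S, ∃ y ∉ S, G.Adj x y ∧ e = s(x, y)}

/-- The descendants of `u`, including `u` itself, when `T` is rooted at `v`: the vertices that
cannot be reached from `v` without passing through `u`. -/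
def descendants (T : SimpleGraph V) (v u : V) : Set V :=
  {x | ∀ p : T.Walk v x, u ∈ p.support}

variable {T : SimpleGraph V} {u v w x y z : V}

lemma self_mem_descendants : u ∈ descendants T v u :=
  fun p => p.end_mem_support

lemma root_notMem_descendants (huv : u ≠ v) : v ∉ descendants T v u :=
  fun h => huv (by simpa using h Walk.nil)

lemma mem_descendants_of_walk_avoiding (hx : x ∈ descendants T v u) (p : T.Walk y x)
    (hp : u ∉ p.support) : y ∈ descendants T v u := fun q =>
  ((Walk.mem_support_append_iff q p).1 (hx (q.append p))).resolve_right hp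

lemma start_notMem_support_dropUntil [DecidableEq V] {p : T.Walk x y} (hp : p.IsPath)
    (hz : z ∈ p.support) (hxz : x ≠ z) : x ∉ (p.dropUntil z hz).support := by
  intro hx
  rw [← p.take_spec hz] at hp
  exact hp.ne_of_mem_support_of_append hxz (p.takeUntil z hz).start_mem_support hx rfl

lemma disjoint_descendants (hT : T.Preconnected) (hw : w ∉ descendants T v u)
    (hu : u ∉ descendants T v w) : Disjoint (descendants T v u) (descendants T v w) := by
  classical
  rw [Set.disjoint_left]
  intro x hxu hxw
  obtain ⟨p, hp⟩ := hT.exists_isPath v x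
  let q := p.dropUntil u (hxu p)
  by_cases hwq : w ∈ q.support
  · have huw : u ≠ w := fun h => hw (h ▸ self_mem_descendants)
    exact hw (mem_descendants_of_walk_avoiding hxu (q.dropUntil w hwq)
      (start_notMem_support_dropUntil (hp.dropUntil _) hwq huw))
  · exact hu (mem_descendants_of_walk_avoiding hxw q hwq)

lemma dist_le_of_mem_descendants (hT : T.Connected) (hx : x ∈ descendants T v u) :
    T.dist v u ≤ T.dist v x := by
  classical
  obtain ⟨p, hp⟩ := hT.exists_walk_length_eq_dist v x
  calc T.dist v u ≤ (p.takeUntil u (hx p)).length := dist_le _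
    _ ≤ p.length := p.length_takeUntil_le_length _
    _ = T.dist v x := hp

lemma eq_of_adj_of_mem_descendants (hx : x ∈ descendants T v u) (hy : y ∉ descendants T v u)
    (hxy : T.Adj x y) : x = u := by
  by_contra hxu
  have huy : u ≠ y := fun h => hy (h ▸ self_mem_descendants)
  exact hy (mem_descendants_of_walk_avoiding hx hxy.symm.toWalk (by simp [huy, Ne.symm hxu]))

lemma exists_isPath_avoiding_of_notMem_descendants (hy : y ∉ descendants T v u) :
    ∃ p : T.Walk v y, p.IsPath ∧ u ∉ p.support := by
  classical
  obtain ⟨p, hp⟩ := not_forall.1 hy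
  exact ⟨p.bypass, p.bypass_isPath, fun h => hp (p.support_bypass_subset_support h)⟩

lemma subsingleton_edgeCut_descendants (hT : T.IsAcyclic) :
    (edgeCut T (descendants T v u)).Subsingleton := by
  rintro _ ⟨x, hx, y, hy, hxy, rfl⟩ _ ⟨x', hx', y', hy', hxy', rfl⟩
  obtain rfl := eq_of_adj_of_mem_descendants hx hy hxy
  obtain rfl := eq_of_adj_of_mem_descendants hx' hy' hxy'
  obtain ⟨p, hp, hxp⟩ := exists_isPath_avoiding_of_notMem_descendants hy
  obtain ⟨q, hq, hxq⟩ := exists_isPath_avoiding_of_notMem_descendants hy'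
  have hpq : p.concat hxy.symm = q.concat hxy'.symm := congrArg Subtype.val
    ((hT.subsingleton_path v x').elim ⟨_, hp.concat hxp _⟩ ⟨_, hq.concat hxq _⟩)
  have hyy' : y = y' := by simpa using congrArg Walk.penultimate hpq
  rw [hyy']

lemma ncard_incidenceSet_union_le_ncard_edgeCut_union [Finite V] {G : SimpleGraph V}
    (hv : G.IsUniversal v) {S R : Set V} (hSR : Disjoint S R) (hu : u ∈ S) (hw : w ∈ R)
    (hvS : v ∉ S) (hvR : v ∉ R) :
    (G.incidenceSet u ∪ G.incidenceSet w).ncard ≤ (edgeCut G S ∪ edgeCut G R).ncard := by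
  classical
  rw [Set.ncard_le_ncard_iff_ncard_sdiff_le_ncard_sdiff]
  let A : Set V := {x | x ∈ S ∧ G.Adj u x ∨ x ∈ R ∧ G.Adj w x}
  let toIncident (x : V) : Sym2 V := if x ∈ S then s(u, x) else s(w, x)
  have incident_subset : (G.incidenceSet u ∪ G.incidenceSet w) \ (edgeCut G S ∪ edgeCut G R) ⊆
      toIncident '' A := by
    rintro e ⟨⟨he, x, rfl⟩ | ⟨he, x, rfl⟩, hcut⟩
    · have hx : x ∈ S := by_contra fun hx => hcut (Or.inl ⟨u, hu, x, hx, he, rfl⟩)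
      exact ⟨x, Or.inl ⟨hx, he⟩, if_pos hx⟩
    · have hx : x ∈ R := by_contra fun hx => hcut (Or.inr ⟨w, hw, x, hx, he, rfl⟩)
      exact ⟨x, Or.inr ⟨hx, he⟩, if_neg (Set.disjoint_right.1 hSR hx)⟩
  have subset_cut : (fun x => s(v, x)) '' A ⊆
      (edgeCut G S ∪ edgeCut G R) \ (G.incidenceSet u ∪ G.incidenceSet w) := by
    have huv : u ≠ v := ne_of_mem_of_not_mem hu hvS
    have hwv : w ≠ v := ne_of_mem_of_not_mem hw hvR
    rintro _ ⟨x, ⟨hx, hadj⟩ | ⟨hx, hadj⟩, rfl⟩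
    · have hwx : w ≠ x := (hSR.ne_of_mem hx hw).symm
      have hvx : G.Adj v x := hv (ne_of_mem_of_not_mem hx hvS).symm
      exact ⟨Or.inl ⟨x, hx, v, hvS, hvx.symm, Sym2.eq_swap⟩,
        by simp [incidenceSet, huv, hwv, hadj.ne, hwx]⟩
    · have hux : u ≠ x := hSR.ne_of_mem hu hx
      have hvx : G.Adj v x := hv (ne_of_mem_of_not_mem hx hvR).symm
      exact ⟨Or.inr ⟨x, hx, v, hvR, hvx.symm, Sym2.eq_swap⟩,
        by simp [incidenceSet, huv, hwv, hadj.ne, hux]⟩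
  calc _ ≤ (toIncident '' A).ncard := Set.ncard_le_ncard incident_subset
    _ ≤ A.ncard := Set.ncard_image_le
    _ = ((fun x => s(v, x)) '' A).ncard :=
        (Set.ncard_image_of_injective A fun _ _ => Sym2.congr_right.1).symm
    _ ≤ _ := Set.ncard_le_ncard subset_cut

end Cuts

section TreeCycles

variable {V : Type*} {G T : SimpleGraph V} {e f : Sym2 V} {S R : Set V} {x y z : V}

lemma pathEdges_subset_edges (hT : T.IsAcyclic) (p : T.Walk x y) :
    pathEdges T x y ⊆ {f | f ∈ p.edges} := by
  classical
  rintro f ⟨q, hq, hf⟩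
  have hqp : q = p.toPath := congrArg Subtype.val ((hT.subsingleton_path x y).elim ⟨q, hq⟩ p.toPath)
  exact p.edges_toPath_subset_edges (hqp ▸ hf)

lemma mem_cycVerts_mk : z ∈ cycVerts T s(x, y) ↔ ∃ p : T.Walk x y, p.IsPath ∧ z ∈ p.support := by
  constructor
  · rintro ⟨a, b, hab, p, hp, hz⟩
    rcases Sym2.eq_iff.1 hab with ⟨rfl, rfl⟩ | ⟨rfl, rfl⟩
    · exact ⟨p, hp, hz⟩
    · exact ⟨p.reverse, hp.reverse, by simpa using hz⟩
  · rintro ⟨p, hp, hz⟩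
    exact ⟨x, y, rfl, p, hp, hz⟩

lemma cyclesIntersect_comm : cyclesIntersect T e f ↔ cyclesIntersect T f e := by
  rw [cyclesIntersect, cyclesIntersect, Set.inter_comm (cycEdges T e)]

lemma edgeCut_subset_edgeSet : edgeCut G S ⊆ G.edgeSet := by
  rintro _ ⟨x, -, y, -, hxy, rfl⟩
  exact hxy

lemma edgeCut_inter_edgeSet_subset : edgeCut G S ∩ T.edgeSet ⊆ edgeCut T S := by
  rintro _ ⟨⟨x, hx, y, hy, -, rfl⟩, hxy⟩
  exact ⟨x, hx, y, hy, hxy, rfl⟩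

lemma cycEdges_inter_edgeCut_nonempty (hT : T.Preconnected) (he : e ∈ edgeCut G S) :
    (cycEdges T e ∩ edgeCut T S).Nonempty := by
  obtain ⟨x, hx, y, hy, -, rfl⟩ := he
  obtain ⟨p, hp⟩ := hT.exists_isPath x y
  obtain ⟨d, hd, hd₁, hd₂⟩ := p.exists_boundary_dart S hx hy
  exact ⟨d.edge, Or.inr ⟨x, y, rfl, p, hp, List.mem_map_of_mem hd⟩, d.fst, hd₁, d.snd, hd₂, d.adj,
    rfl⟩

lemma cyclesIntersect_of_mem_edgeCut (hT : T.Preconnected) (hS : (edgeCut T S).Subsingleton)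
    (he : e ∈ edgeCut G S) (hf : f ∈ edgeCut G S) : cyclesIntersect T e f := by
  obtain ⟨g, hge, hg⟩ := cycEdges_inter_edgeCut_nonempty hT he
  obtain ⟨g', hgf, hg'⟩ := cycEdges_inter_edgeCut_nonempty hT hf
  obtain rfl := hS hg hg'
  exact ⟨g, ⟨hge, hgf⟩, edgeCut_subset_edgeSet hg⟩

lemma ncard_edgeCut_union_le_cycleInterNum_add_three [Finite V] (hT : T.Preconnected)
    (hS : (edgeCut T S).Subsingleton) (hR : (edgeCut T R).Subsingleton)
    (heS : e ∈ edgeCut G S) (heR : e ∈ edgeCut G R) :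
    (edgeCut G S ∪ edgeCut G R).ncard ≤ cycleInterNum G T e + 3 := by
  have hsub : edgeCut G S ∪ edgeCut G R ⊆
      {f | f ∈ G.edgeSet \ T.edgeSet ∧ f ≠ e ∧ cyclesIntersect T e f} ∪
        ({e} ∪ (edgeCut T S ∪ edgeCut T R)) := by
    intro f hf
    by_cases hfe : f = e
    · exact Or.inr (Or.inl hfe)
    by_cases hfT : f ∈ T.edgeSet
    · exact Or.inr (Or.inr (hf.imp (edgeCut_inter_edgeSet_subset ⟨·, hfT⟩)
        (edgeCut_inter_edgeSet_subset ⟨·, hfT⟩)))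
    · have hfG : f ∈ G.edgeSet := Set.union_subset edgeCut_subset_edgeSet edgeCut_subset_edgeSet hf
      exact Or.inl ⟨⟨hfG, hfT⟩, hfe, hf.elim (cyclesIntersect_of_mem_edgeCut hT hS heS)
        (cyclesIntersect_of_mem_edgeCut hT hR heR)⟩
  have hS₁ : (edgeCut T S).ncard ≤ 1 := Set.ncard_le_one_iff_subsingleton.2 hS
  have hR₁ : (edgeCut T R).ncard ≤ 1 := Set.ncard_le_one_iff_subsingleton.2 hR
  calc _ ≤ _ := Set.ncard_le_ncard hsub
    _ ≤ cycleInterNum G T e + ({e} ∪ (edgeCut T S ∪ edgeCut T R)).ncard := Set.ncard_union_le _ _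
    _ ≤ cycleInterNum G T e + (1 + (edgeCut T S ∪ edgeCut T R).ncard) := by
      grw [Set.ncard_union_le, Set.ncard_singleton]
    _ ≤ cycleInterNum G T e + (1 + (1 + 1)) := by
      grw [Set.ncard_union_le, hS₁, hR₁]

lemma treeInterNum_eq_deleteEdges_singleton_add_cycleInterNum [Finite V]
    (he : e ∈ G.edgeSet \ T.edgeSet) :
    treeInterNum G T = treeInterNum (G.deleteEdges {e}) T + cycleInterNum G T e := by
  have hinj : Function.Injective (fun f : Sym2 V => s(e, f)) := fun _ _ => Sym2.congr_right.1
  unfold treeInterNum cycleInterNum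
  rw [← Set.ncard_image_of_injective _ hinj, ← Set.ncard_union_eq]
  · congr 1
    ext q
    simp only [edgeSet_deleteEdges]
    constructor
    · rintro ⟨a, b, rfl, hab, ha, hb, hI⟩
      by_cases hae : a = e
      · subst hae
        exact Or.inr ⟨b, ⟨hb, hab.symm, hI⟩, rfl⟩
      by_cases hbe : b = e
      · subst hbe
        exact Or.inr ⟨a, ⟨ha, hab, cyclesIntersect_comm.1 hI⟩, Sym2.eq_swap⟩
      · exact Or.inl ⟨a, b, rfl, hab, ⟨⟨ha.1, hae⟩, ha.2⟩, ⟨⟨hb.1, hbe⟩, hb.2⟩, hI⟩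
    · rintro (⟨a, b, rfl, hab, ha, hb, hI⟩ | ⟨b, ⟨hb, hbe, hI⟩, rfl⟩)
      · exact ⟨a, b, rfl, hab, ⟨ha.1.1, ha.2⟩, ⟨hb.1.1, hb.2⟩, hI⟩
      · exact ⟨e, b, rfl, hbe.symm, he, hb, hI⟩
  · rw [Set.disjoint_left]
    rintro _ ⟨a, b, rfl, -, ha, hb, -⟩ ⟨f, -, hf⟩
    rw [edgeSet_deleteEdges] at ha hb
    have hmem : e ∈ s(a, b) := by
      rw [← hf]
      exact Sym2.mem_mk_left e f
    rcases Sym2.mem_iff.1 hmem with rfl | rfl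
    · exact ha.1.2 rfl
    · exact hb.1.2 rfl

end TreeCycles

section Star

variable {V : Type*} {G T : SimpleGraph V} {e f g : Sym2 V} {u v w : V}

lemma IsStarSpanningTree.eq_starGraph (hT : IsStarSpanningTree G T v) : T = starGraph v := by
  have hle : starGraph v ≤ T := by
    intro x y hxy
    obtain ⟨hne, rfl | rfl⟩ := starGraph_adj.1 hxy
    · exact hT.2.2 y hne.symm
    · exact (hT.2.2 x hne).symm
  have hmax : Maximal IsAcyclic (starGraph v) :=
    (isTree_iff_maximal_isAcyclic.1 (isTree_starGraph v)).2
  exact (hmax.eq_of_le hT.2.1.isAcyclic hle).symm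

lemma IsStarSpanningTree.isUniversal (hT : IsStarSpanningTree G T v) : G.IsUniversal v :=
  fun u hu => hT.1 (hT.2.2 u hu.symm)

lemma mem_edgeSet_starGraph_iff (he : e ∈ G.edgeSet) : e ∈ (starGraph v).edgeSet ↔ v ∈ e := by
  induction e with
  | _ x y =>
    have hxy : x ≠ y := Adj.ne he
    simp [hxy, eq_comm]

lemma exists_mem_eq_of_mem_cycEdges_starGraph (hve : v ∉ e) (hg : g ∈ cycEdges (starGraph v) e)
    (hgs : g ∈ (starGraph v).edgeSet) : ∃ a ∈ e, g = s(v, a) := by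
  have hvg : v ∈ g := (mem_edgeSet_starGraph_iff hgs).1 hgs
  rcases hg with rfl | ⟨x, y, rfl, hg⟩
  · exact absurd hvg hve
  · simp only [Sym2.mem_iff, not_or] at hve
    let p : (starGraph v).Walk x y :=
      .cons (starGraph_center_adj' hve.1) (starGraph_center_adj hve.2).toWalk
    have hgp : g ∈ p.edges := pathEdges_subset_edges (isAcyclic_starGraph v) p hg
    rcases List.mem_pair.1 hgp with rfl | rfl
    · exact ⟨x, by simp, Sym2.eq_swap⟩
    · exact ⟨y, by simp, rfl⟩

lemma exists_mem_mem_of_cyclesIntersect_starGraph (he : v ∉ e) (hf : v ∉ f)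
    (h : cyclesIntersect (starGraph v) e f) : ∃ a, a ∈ e ∧ a ∈ f := by
  obtain ⟨g, ⟨hge, hgf⟩, hg⟩ := h
  obtain ⟨a, ha, rfl⟩ := exists_mem_eq_of_mem_cycEdges_starGraph he hge hg
  obtain ⟨b, hb, hab⟩ := exists_mem_eq_of_mem_cycEdges_starGraph hf hgf hg
  exact ⟨a, ha, Sym2.congr_right.1 hab ▸ hb⟩

lemma cycleInterNum_starGraph_add_three_le [Finite V] (hv : G.IsUniversal v) (huw : G.Adj u w)
    (hu : v ≠ u) (hw : v ≠ w) :
    cycleInterNum G (starGraph v) s(u, w) + 3 ≤ (G.incidenceSet u ∪ G.incidenceSet w).ncard := by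
  have hsub : {s(u, w), s(v, u), s(v, w)} ⊆ G.incidenceSet u ∪ G.incidenceSet w := by
    rintro _ (rfl | rfl | rfl)
    · exact Or.inl ⟨huw, by simp⟩
    · exact Or.inl ⟨hv hu, by simp⟩
    · exact Or.inr ⟨hv hw, by simp⟩
  have hthree : ({s(u, w), s(v, u), s(v, w)} : Set (Sym2 V)).ncard = 3 :=
    Set.ncard_eq_three.2 ⟨s(u, w), s(v, u), s(v, w), by simp [hu.symm, hw.symm],
      Sym2.congr_left.not.2 hu.symm, Sym2.congr_right.not.2 huw.ne, rfl⟩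
  rw [← Set.ncard_sdiff_add_ncard_of_subset hsub, hthree]
  refine Nat.add_le_add_right (Set.ncard_le_ncard ?_) 3
  rintro f ⟨⟨hfG, hf⟩, hfe, hI⟩
  have hvf : v ∉ f := fun h => hf ((mem_edgeSet_starGraph_iff hfG).2 h)
  obtain ⟨a, ha, haf⟩ := exists_mem_mem_of_cyclesIntersect_starGraph (by simp [hu, hw]) hvf hI
  constructor
  · rcases Sym2.mem_iff.1 ha with rfl | rfl
    · exact Or.inl ⟨hfG, haf⟩
    · exact Or.inr ⟨hfG, haf⟩
  · rintro (rfl | rfl | rfl)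
    · exact hfe rfl
    · exact hvf (Sym2.mem_mk_left v u)
    · exact hvf (Sym2.mem_mk_left v w)

end Star

section Interbranch

variable {V : Type*} {G T : SimpleGraph V} {e : Sym2 V} {u v w : V}

lemma notMem_descendants_of_mem_interbranchSet (hT : T.Connected)
    (he : s(u, w) ∈ interbranchSet G T v) : w ∉ descendants T v u := by
  classical
  intro hw
  obtain ⟨p, hp⟩ := hT.preconnected.exists_isPath u w
  refine he.2 u (mem_cycVerts_mk.2 ⟨p, hp, p.start_mem_support⟩) (fun z hz => ?_)
    (Sym2.mem_mk_left u w)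
  obtain ⟨q, hq, hz⟩ := mem_cycVerts_mk.1 hz
  apply dist_le_of_mem_descendants hT
  rcases eq_or_ne u z with rfl | huz
  · exact self_mem_descendants
  · exact mem_descendants_of_walk_avoiding hw (q.dropUntil z hz)
      (start_notMem_support_dropUntil hq hz huz)

lemma root_notMem_of_mem_interbranchSet (hT : T.Connected) (he : e ∈ interbranchSet G T v) :
    v ∉ e := by
  rintro ⟨w, rfl⟩
  exact notMem_descendants_of_mem_interbranchSet hT he fun p => p.start_mem_support

lemma cycleInterNum_starGraph_le_of_mem_interbranchSet [Finite V] (hv : G.IsUniversal v)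
    (hT : T.IsTree) (he : e ∈ interbranchSet G T v) :
    cycleInterNum G (starGraph v) e ≤ cycleInterNum G T e := by
  induction e with
  | _ u w =>
  obtain ⟨hvu, hvw⟩ : v ≠ u ∧ v ≠ w := by
    simpa using root_notMem_of_mem_interbranchSet hT.connected he
  have huw : G.Adj u w := he.1.1
  have hw := notMem_descendants_of_mem_interbranchSet hT.connected he
  have hu := notMem_descendants_of_mem_interbranchSet hT.connected (Sym2.eq_swap ▸ he)
  refine Nat.le_of_add_le_add_right (b := 3) ?_
  calc cycleInterNum G (starGraph v) s(u, w) + 3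
      ≤ (G.incidenceSet u ∪ G.incidenceSet w).ncard :=
        cycleInterNum_starGraph_add_three_le hv huw hvu hvw
    _ ≤ (edgeCut G (descendants T v u) ∪ edgeCut G (descendants T v w)).ncard :=
        ncard_incidenceSet_union_le_ncard_edgeCut_union hv
          (disjoint_descendants hT.connected.preconnected hw hu)
          self_mem_descendants self_mem_descendants
          (root_notMem_descendants hvu.symm) (root_notMem_descendants hvw.symm)
    _ ≤ cycleInterNum G T s(u, w) + 3 :=
        ncard_edgeCut_union_le_cycleInterNum_add_three hT.connected.preconnected
          (subsingleton_edgeCut_descendants hT.isAcyclic)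
          (subsingleton_edgeCut_descendants hT.isAcyclic)
          ⟨u, self_mem_descendants, w, hw, huw, rfl⟩
          ⟨w, self_mem_descendants, u, hu, huw.symm, Sym2.eq_swap⟩

lemma treeInterNum_starGraph_add_deleteEdges_le [Finite V] (hv : G.IsUniversal v) (hT : T.IsTree)
    {D : Set (Sym2 V)} (hD : D ⊆ interbranchSet G T v) :
    treeInterNum G (starGraph v) + treeInterNum (G.deleteEdges D) T ≤
      treeInterNum G T + treeInterNum (G.deleteEdges D) (starGraph v) := by
  have root_notMem {f} (hf : f ∈ interbranchSet G T v) : v ∉ f :=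
    root_notMem_of_mem_interbranchSet hT.connected hf
  induction D, Set.toFinite D using Set.Finite.induction_on with
  | empty => simp [add_comm]
  | @insert e D heD _ ih =>
    obtain ⟨he, hD⟩ := Set.insert_subset_iff.1 hD
    rw [← Set.union_singleton, ← deleteEdges_deleteEdges]
    set H := G.deleteEdges D
    have heH : e ∈ H.edgeSet := by
      rw [edgeSet_deleteEdges]
      exact ⟨he.1.1, heD⟩
    have hvH : H.IsUniversal v := fun x hx =>
      deleteEdges_adj.2 ⟨hv hx, fun h => root_notMem (hD h) (Sym2.mem_mk_left v x)⟩
    have heT : e ∈ interbranchSet H T v := ⟨⟨heH, he.1.2⟩, he.2⟩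
    have heS : e ∉ (starGraph v).edgeSet := (mem_edgeSet_starGraph_iff heH).not.2 (root_notMem he)
    have hcycle := cycleInterNum_starGraph_le_of_mem_interbranchSet hvH hT heT
    have hsplitT := treeInterNum_eq_deleteEdges_singleton_add_cycleInterNum heT.1
    have hsplitS := treeInterNum_eq_deleteEdges_singleton_add_cycleInterNum ⟨heH, heS⟩
    linarith [ih hD]

end Interbranch

/-- If a connected graph `G` admits a star spanning tree `T_s` with center
`v`, and `T` is a spanning tree with `∩_G(T) < ∩_G(T_s)`, then removing the set `Δ_T` of
interbranch cycle-edges of `T` preserves the inequality: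
`∩_{G-Δ_T}(T) < ∩_{G-Δ_T}(T_s)`. -/
theorem stmt_17 {V : Type*} [Fintype V] (G Ts T : SimpleGraph V)
    (hG : G.Connected) (v : V) (hTs : IsStarSpanningTree G Ts v)
    (hle : T ≤ G) (hT : T.IsTree)
    (hlt : treeInterNum G T < treeInterNum G Ts) :
    treeInterNum (G.deleteEdges (interbranchSet G T v)) T
      < treeInterNum (G.deleteEdges (interbranchSet G T v)) Ts := by
  obtain rfl := hTs.eq_starGraph
  have hdelete := treeInterNum_starGraph_add_deleteEdges_le hTs.isUniversal hT
    (Set.Subset.refl (interbranchSet G T v))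
  lia
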